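/- arXiv:math/0502455 — 2 statements merged into one kernel-verified Lean document; each statement's English description precedes it below -/
import Mathlib

section
/- Let N be a continuous nest on a separable infinite-dimensional complex Hilbert space and let K₊ := {X ∈ Alg N : (I − N(t)) X is compact for every t > 0}. Then for every X ∈ Alg N the quotient norm is given by dist(X, K₊) = sup{‖(I − N(t)) X (I − N(t))‖_e : 0 < t ≤ 1}. -/
open Set Filter Topology

noncomputable def essNorm {H : Type*} [NormedAddCommGroup H] [InnerProductSpace ℂ H]
    [CompleteSpace H] (T : H →L[ℂ] H) : ℝ :=
  Metric.infDist T {K : H →L[ℂ] H | IsCompactOperator ⇑K}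

/-- A continuous nest on `H`, parameterized by `[0,1]`: an increasing family of orthogonal
projections `N t` whose ranges strictly increase, with `N 0 = 0`, `N 1 = 1`, and
`t ↦ N t ξ` norm-continuous on `[0,1]` for every `ξ`. -/
structure ContinuousNest (H : Type*) [NormedAddCommGroup H] [InnerProductSpace ℂ H]
    [CompleteSpace H] where
  N : ℝ → H →L[ℂ] H
  idem : ∀ t ∈ Icc (0 : ℝ) 1, IsIdempotentElem (N t)
  selfAdjoint : ∀ t ∈ Icc (0 : ℝ) 1, IsSelfAdjoint (N t)
  range_lt : ∀ s t : ℝ, s ∈ Icc (0 : ℝ) 1 → t ∈ Icc (0 : ℝ) 1 → s < t →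
    LinearMap.range (N s).toLinearMap < LinearMap.range (N t).toLinearMap
  N_zero : N 0 = 0
  N_one : N 1 = 1
  contOn : ∀ ξ : H, ContinuousOn (fun t => N t ξ) (Icc (0 : ℝ) 1)

variable {H : Type*} [NormedAddCommGroup H] [InnerProductSpace ℂ H] [CompleteSpace H]

/-- `P₁` refines `P₂`: every interval of `P₁` is dominated by an interval of `P₂`
(in the Loewner order). -/
def OpRefines (P₁ P₂ : Set (H →L[ℂ] H)) : Prop :=
  ∀ E ∈ P₁, ∃ F ∈ P₂, ContinuousLinearMap.IsPositive (F - E)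

namespace ContinuousNest

variable (𝒩 : ContinuousNest H)

/-- The nest algebra of `𝒩`. -/
def alg : Set (H →L[ℂ] H) := {T | ∀ t ∈ Icc (0 : ℝ) 1, (1 - 𝒩.N t) * T * 𝒩.N t = 0}

/-- An interval of the nest: a difference `N t - N s` with `0 ≤ s ≤ t ≤ 1`. -/
def IsInterval (E : H →L[ℂ] H) : Prop :=
  ∃ s t : ℝ, 0 ≤ s ∧ s ≤ t ∧ t ≤ 1 ∧ E = 𝒩.N t - 𝒩.N s

def IsIntervalFamily (P : Set (H →L[ℂ] H)) : Prop := ∀ E ∈ P, 𝒩.IsInterval E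

/-- A net of families of intervals: directed under refinement. -/
def IsNet (O : Set (Set (H →L[ℂ] H))) : Prop :=
  (∀ P ∈ O, 𝒩.IsIntervalFamily P) ∧
  ∀ P ∈ O, ∀ Q ∈ O, ∃ R ∈ O, OpRefines R P ∧ OpRefines R Q

def nestSet : Set (H →L[ℂ] H) := 𝒩.N '' Icc (0 : ℝ) 1

/-- An order automorphism of the nest: an order-preserving bijection of `{N t : t ∈ [0,1]}`
onto itself. -/
def IsAuto (θ : (H →L[ℂ] H) → H →L[ℂ] H) : Prop :=
  Set.BijOn θ 𝒩.nestSet 𝒩.nestSet ∧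
  ∀ s t : ℝ, s ∈ Icc (0 : ℝ) 1 → t ∈ Icc (0 : ℝ) 1 → s ≤ t →
    ContinuousLinearMap.IsPositive (θ (𝒩.N t) - θ (𝒩.N s))

/-- The image family `θ(P) = {θ(N t) - θ(N s) : N t - N s ∈ P}`. -/
def autoImage (θ : (H →L[ℂ] H) → H →L[ℂ] H) (P : Set (H →L[ℂ] H)) : Set (H →L[ℂ] H) :=
  {E | ∃ s t : ℝ, 0 ≤ s ∧ s ≤ t ∧ t ≤ 1 ∧ 𝒩.N t - 𝒩.N s ∈ P ∧ E = θ (𝒩.N t) - θ (𝒩.N s)}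

/-- A stable net of intervals. -/
def IsStableNet (O : Set (Set (H →L[ℂ] H))) : Prop :=
  𝒩.IsNet O ∧ ∀ θ, 𝒩.IsAuto θ → ∀ P ∈ O, 𝒩.autoImage θ P ∈ O

/-- The kernel of a net `O`: those `X` in the nest algebra with
`lim_{P ∈ O} sup_{E ∈ P} ‖EXE‖ₑ = 0`; since the sup decreases under refinement, this limit
is `0` iff for every `ε > 0` some `P ∈ O` has all `‖EXE‖ₑ < ε`. -/
def kernel (O : Set (Set (H →L[ℂ] H))) : Set (H →L[ℂ] H) :=
  {X | X ∈ 𝒩.alg ∧ ∀ ε : ℝ, 0 < ε → ∃ P ∈ O, ∀ E ∈ P, essNorm (E * X * E) < ε}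

/-- A two-sided ideal of the nest algebra. -/
def IsIdeal (I : Set (H →L[ℂ] H)) : Prop :=
  I ⊆ 𝒩.alg ∧ (0 : H →L[ℂ] H) ∈ I ∧
  (∀ X ∈ I, ∀ Y ∈ I, X + Y ∈ I) ∧ (∀ X ∈ I, -X ∈ I) ∧
  ∀ A ∈ 𝒩.alg, ∀ X ∈ I, A * X ∈ I ∧ X * A ∈ I

/-- A stable ideal: a norm-closed two-sided ideal invariant under every automorphism
`T ↦ S T S⁻¹` of the nest algebra implemented by an invertible `S ∈ B(H)`. -/
def IsStableIdeal (I : Set (H →L[ℂ] H)) : Prop :=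
  𝒩.IsIdeal I ∧ IsClosed I ∧
  ∀ S : (H →L[ℂ] H)ˣ,
    (fun T => (↑S : H →L[ℂ] H) * T * (↑S⁻¹ : H →L[ℂ] H)) '' 𝒩.alg = 𝒩.alg →
    (fun T => (↑S : H →L[ℂ] H) * T * (↑S⁻¹ : H →L[ℂ] H)) '' I = I

end ContinuousNest

/-!
The lower bound holds because `1 - N t` is a contraction and `(1 - N t) K` is compact for `K ∈ K₊`.
For the upper bound let all `‖(1 - N t) X‖ₑ` be less than `r`; put `p n = 1 - N (1 / (n + 1))`.
Modify `X` successively by compact operators of `Alg N`, the `n`-th step changing only the rows in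
`p (n + 1) - p n`, so that the result `y n` satisfies `‖p n * y n‖ < r`. The operators `p n * y n`
then cohere to a strong limit `L ∈ Alg N` with `‖L‖ ≤ r` and `X - L ∈ K₊`.

A single step is about a column `(z, w)` with `‖z‖ < r` and essential norm less than `r`. Writing
`r² - z⋆z = d⋆d` with `d` invertible, `w d⁻¹` has essential norm at most `1`. It remains to multiply
`w` on the left by some `a ∈ Alg N` with `1 - a` compact and `‖a w d⁻¹‖` nearly at most `1`, so it
suffices to find `a ∈ Alg N` with `1 - a` compact, `‖a‖ ≤ 1 + ε` and `‖a k‖ ≤ ε` for a given compact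
`k`. Such an `a` is `(1 + V)⁻¹`, where `V` is the upper triangular truncation of a large multiple of
`k k⋆` along a fine partition of the nest: the diagonal blocks of `k k⋆` are small because
`t ↦ N t k` is norm-continuous, so `V + V⋆` is nearly that multiple of `k k⋆`.
-/

section TwoSidedIdeal

variable {R : Type*} [NormedRing R] {J : TwoSidedIdeal R} {a b : R}

lemma exists_mem_norm_sub_lt_of_infDist_lt {r : ℝ}
    (ha : Metric.infDist a J < r) : ∃ k ∈ J, ‖a - k‖ < r := by
  simpa only [SetLike.mem_coe, dist_eq_norm] using (Metric.infDist_lt_iff ⟨0, J.zero_mem⟩).1 ha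

lemma infDist_le_norm_of_sub_mem (hab : a - b ∈ J) : Metric.infDist a J ≤ ‖b‖ := by
  simpa only [dist_eq_norm, sub_sub_cancel] using Metric.infDist_le_dist_of_mem (x := a) hab

lemma infDist_eq_of_sub_mem (hab : a - b ∈ J) : Metric.infDist a J = Metric.infDist b J := by
  have key {x y : R} (hxy : x - y ∈ J) : Metric.infDist x J ≤ Metric.infDist y J := by
    refine le_of_forall_gt fun r hr => ?_
    obtain ⟨k, hk, hlt⟩ := exists_mem_norm_sub_lt_of_infDist_lt hr
    refine (infDist_le_norm_of_sub_mem ?_).trans_lt hlt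
    simpa only [sub_sub_eq_add_sub, add_sub_right_comm] using J.add_mem hxy hk
  exact le_antisymm (key hab) (key (by simpa only [neg_sub] using J.neg_mem hab))

/-- The elements of `S` congruent to `1` modulo `J` include approximate contractions that annihilate
any given element of `J` approximately from the left; thus the elements `1 - a` form an approximate
left unit of `J`. -/
def LeftApproxAnnihilates {σ : Type*} [SetLike σ R] (S : σ) (J : TwoSidedIdeal R) : Prop :=
  ∀ k ∈ J, ∀ ε > 0, ∃ a ∈ S, 1 - a ∈ J ∧ ‖a‖ ≤ 1 + ε ∧ ‖a * k‖ ≤ ε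

lemma exists_mem_norm_mul_lt_of_infDist_lt {σ : Type*} [SetLike σ R] {S : σ} {x : R} {r : ℝ}
    (hS : LeftApproxAnnihilates S J) (hx : Metric.infDist x J < r) :
    ∃ a ∈ S, 1 - a ∈ J ∧ ‖a * x‖ < r := by
  obtain ⟨k, hk, hlt⟩ := exists_mem_norm_sub_lt_of_infDist_lt hx
  set s := ‖x - k‖
  have hs1 : 0 < s + 1 := by positivity
  obtain ⟨ε, hε, hεs⟩ := exists_between (div_pos (sub_pos.2 hlt) hs1)
  rw [lt_div_iff₀ hs1] at hεs
  obtain ⟨a, haS, ha1, hnorm, hak⟩ := hS k hk ε hε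
  refine ⟨a, haS, ha1, ?_⟩
  calc ‖a * x‖ = ‖a * (x - k) + a * k‖ := by rw [mul_sub, sub_add_cancel]
    _ ≤ ‖a‖ * s + ‖a * k‖ := (norm_add_le _ _).trans (add_le_add_left (norm_mul_le _ _) _)
    _ ≤ (1 + ε) * s + ε := by gcongr
    _ < r := by linarith

end TwoSidedIdeal

section Truncation

variable {R : Type*} [Ring R]

/-- The strictly upper triangular truncation of `x` along the chain `p 0, …, p n`, which keeps the
blocks of `x` strictly above the diagonal; `p i` plays the role of the span of the first `i` blocks
of a basis. -/
def upperTruncation (p : ℕ → R) (x : R) (n : ℕ) : R :=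
  ∑ i ∈ Finset.range n, p i * x * (p (i + 1) - p i)

lemma upperTruncation_add_star_add_diagonal [StarRing R] {p : ℕ → R} {x : R}
    (hp : ∀ i, IsSelfAdjoint (p i)) (hp0 : p 0 = 0) (hx : IsSelfAdjoint x) (n : ℕ) :
    upperTruncation p x n + star (upperTruncation p x n) +
      ∑ i ∈ Finset.range n, (p (i + 1) - p i) * x * (p (i + 1) - p i) = p n * x * p n := by
  induction n with
  | zero => simp [upperTruncation, hp0]
  | succ n ih =>
    have hsucc : p (n + 1) * x * p (n + 1) = p n * x * p n + (p n * x * (p (n + 1) - p n) +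
        (p (n + 1) - p n) * x * p n + (p (n + 1) - p n) * x * (p (n + 1) - p n)) := by
      noncomm_ring
    rw [hsucc, ← ih]
    simp only [upperTruncation, Finset.sum_range_succ, star_add, star_mul, star_sub,
      (hp _).star_eq, hx.star_eq, mul_assoc]
    abel

end Truncation

lemma star_mul_self_add_of_mul_eq_zero {R : Type*} [NonUnitalRing R] [StarRing R] {p q : R}
    (y z : R) (hp : IsSelfAdjoint p) (hq : IsSelfAdjoint q) (hpq : p * q = 0) :
    star (p * y + q * z) * (p * y + q * z) =
      star (p * y) * (p * y) + star (q * z) * (q * z) := by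
  have hqp : q * p = 0 := by simpa [hp.star_eq, hq.star_eq] using congrArg star hpq
  have hcross (u v : R) : star (p * u) * (q * v) = 0 := by
    rw [star_mul, hp.star_eq, mul_assoc, ← mul_assoc p, hpq, zero_mul, mul_zero]
  have hcross' (u v : R) : star (q * u) * (p * v) = 0 := by
    rw [star_mul, hq.star_eq, mul_assoc, ← mul_assoc q, hqp, zero_mul, mul_zero]
  rw [star_add, add_mul, mul_add, mul_add, hcross, hcross', zero_add, add_zero]

section CStarAlgebra

variable {A : Type*} [CStarAlgebra A] [PartialOrder A] [StarOrderedRing A]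

lemma norm_le_iff_star_mul_self_le {a : A} {r : ℝ} (hr : 0 ≤ r) :
    ‖a‖ ≤ r ↔ star a * a ≤ algebraMap ℝ A (r ^ 2) := by
  rw [← CStarAlgebra.norm_le_iff_le_algebraMap _ (sq_nonneg r) (star_mul_self_nonneg a),
    CStarRing.norm_star_mul_self, ← sq, sq_le_sq₀ (norm_nonneg a) hr]

lemma star_mul_add_star_mul_le (a b : A) {t : ℝ} (ht : 0 < t) :
    star a * b + star b * a ≤ t • (star a * a) + t⁻¹ • (star b * b) := by
  have hsq : t⁻¹ • (star (t • a - b) * (t • a - b)) =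
      t • (star a * a) + t⁻¹ • (star b * b) - (star a * b + star b * a) := by
    simp only [star_sub, star_smul, star_trivial, sub_mul, mul_sub, smul_mul_assoc, mul_smul_comm,
      smul_sub, smul_smul, inv_mul_cancel₀ ht.ne', inv_mul_cancel_left₀ ht.ne', one_smul]
    abel
  rw [← sub_nonneg, ← hsq]
  exact smul_nonneg (inv_nonneg.2 ht.le) (star_mul_self_nonneg _)

lemma star_add_mul_add_le (a b : A) {t : ℝ} (ht : 0 < t) :
    star (a + b) * (a + b) ≤ (1 + t) • (star a * a) + (1 + t⁻¹) • (star b * b) :=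
  calc star (a + b) * (a + b)
      = star a * a + star b * b + (star a * b + star b * a) := by
        rw [star_add]; noncomm_ring
    _ ≤ star a * a + star b * b + (t • (star a * a) + t⁻¹ • (star b * b)) :=
        add_le_add le_rfl (star_mul_add_star_mul_le a b ht)
    _ = (1 + t) • (star a * a) + (1 + t⁻¹) • (star b * b) := by module

lemma exists_unit_star_mul_self_add_eq {z : A} {r : ℝ} (hz : ‖z‖ < r) :
    ∃ d : Aˣ, star (d : A) * d + star z * z = algebraMap ℝ A (r ^ 2) := by
  have hgap : 0 < r ^ 2 - ‖z‖ ^ 2 := sub_pos.2 (pow_lt_pow_left₀ hz (norm_nonneg z) two_ne_zero)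
  have hle : algebraMap ℝ A (r ^ 2 - ‖z‖ ^ 2) ≤ algebraMap ℝ A (r ^ 2) - star z * z := by
    rw [map_sub]
    exact sub_le_sub_left CStarAlgebra.star_mul_le_algebraMap_norm_sq _
  have hpos : IsStrictlyPositive (algebraMap ℝ A (r ^ 2) - star z * z) :=
    (isStrictlyPositive_algebraMap hgap).of_le hle
  obtain ⟨_, ⟨d, rfl⟩, hd⟩ := CStarAlgebra.isStrictlyPositive_iff_eq_star_mul_self.1 hpos
  exact ⟨d, by rw [← hd, sub_add_cancel]⟩

lemma star_mul_self_add_le_of_norm_mul_inv_le {d : Aˣ} {z s : A} {r c : ℝ}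
    (hd : star (d : A) * d + star z * z = algebraMap ℝ A (r ^ 2)) (hc : 1 ≤ c)
    (hs : ‖s * ↑d⁻¹‖ ≤ c) :
    star z * z + star s * s ≤ algebraMap ℝ A ((c * r) ^ 2) := by
  have hsd : star s * s ≤ c ^ 2 • (star (d : A) * d) := by
    have := star_left_conjugate_le_conjugate
      ((norm_le_iff_star_mul_self_le (zero_le_one.trans hc)).1 hs) (d : A)
    rwa [← mul_assoc, ← star_mul, mul_assoc, mul_assoc, Units.inv_mul, mul_one,
      Algebra.algebraMap_eq_smul_one, mul_smul_one, smul_mul_assoc] at this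
  calc star z * z + star s * s
      ≤ c ^ 2 • (star z * z) + c ^ 2 • (star (d : A) * d) :=
        add_le_add (le_smul_of_one_le_left (star_mul_self_nonneg z) (one_le_pow₀ hc)) hsd
    _ = algebraMap ℝ A ((c * r) ^ 2) := by
        rw [← smul_add, add_comm, hd, mul_pow, map_mul, Algebra.smul_def]

section Accretive

variable {a c w : A} {θ : ℝ}

lemma star_mul_self_add_smul_le_of_accretive (hwa : w * a = 1)
    (h : c * star c + (2 * θ) • 1 ≤ w + star w) :
    star (star c * a) * (star c * a) + (2 * θ) • (star a * a) ≤ a + star a := by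
  have hconj := star_left_conjugate_le_conjugate h a
  have hwa' : star a * star w = 1 := by rw [← star_mul, hwa, star_one]
  have hright : star a * (w + star w) * a = a + star a := by
    rw [mul_add, add_mul, hwa', mul_assoc, hwa, one_mul, mul_one, add_comm]
  have hleft : star a * (c * star c + (2 * θ) • 1) * a =
      star (star c * a) * (star c * a) + (2 * θ) • (star a * a) := by
    simp only [mul_add, add_mul, mul_smul_comm, smul_mul_assoc, mul_one, star_mul, star_star,
      mul_assoc]
  rwa [hright, hleft] at hconj

lemma norm_le_inv_of_accretive (hθ : 0 < θ) (hwa : w * a = 1)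
    (h : c * star c + (2 * θ) • 1 ≤ w + star w) : ‖a‖ ≤ θ⁻¹ := by
  have hquad : (2 * θ) • (star a * a) ≤ θ • (star a * a) + θ⁻¹ • 1 :=
    calc (2 * θ) • (star a * a)
        ≤ a + star a := (le_add_of_nonneg_left (star_mul_self_nonneg _)).trans
          (star_mul_self_add_smul_le_of_accretive hwa h)
      _ ≤ θ • (star a * a) + θ⁻¹ • 1 := by
          simpa [add_comm] using star_mul_add_star_mul_le a 1 hθ
  have hθa : θ • (star a * a) ≤ θ⁻¹ • 1 := by
    rwa [two_mul, add_smul, add_le_add_iff_left] at hquad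
  rw [norm_le_iff_star_mul_self_le (inv_nonneg.2 hθ.le)]
  calc star a * a = θ⁻¹ • θ • (star a * a) := (inv_smul_smul₀ hθ.ne' _).symm
    _ ≤ θ⁻¹ • θ⁻¹ • 1 := smul_le_smul_of_nonneg_left hθa (inv_nonneg.2 hθ.le)
    _ = algebraMap ℝ A (θ⁻¹ ^ 2) := by rw [smul_smul, ← sq, Algebra.algebraMap_eq_smul_one]

lemma two_mul_norm_mul_sq_le_one_of_accretive (hθ : 0 < θ) (hwa : w * a = 1)
    (h : c * star c + (2 * θ) • 1 ≤ w + star w) : 2 * θ * ‖a * c‖ ^ 2 ≤ 1 := by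
  set y : A := star c * a * c with hy
  have hquad : star y * y + (2 * θ) • (star (a * c) * (a * c)) ≤ y + star y := by
    have := star_left_conjugate_le_conjugate (star_mul_self_add_smul_le_of_accretive hwa h) c
    simpa only [hy, mul_add, add_mul, mul_smul_comm, smul_mul_assoc, star_mul, star_star,
      mul_assoc] using this
  have hyy : y + star y ≤ star y * y + 1 := by
    simpa [add_comm] using star_mul_add_star_mul_le y 1 one_pos
  have hac : (2 * θ) • (star (a * c) * (a * c)) ≤ 1 := by
    rw [← add_le_add_iff_left (star y * y)]
    exact hquad.trans hyy
  rw [← CStarAlgebra.norm_le_one_iff_of_nonneg _ (smul_nonneg (by positivity)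
    (star_mul_self_nonneg _)), norm_smul, CStarRing.norm_star_mul_self,
    Real.norm_of_nonneg (by positivity), ← sq] at hac
  exact hac

end Accretive

section UpperTruncation

variable {p : ℕ → A} {x : A} (hp : ∀ i, IsStarProjection (p i)) (hmono : Monotone p)
include hp hmono

lemma upperTruncation_mul_succ (n k : ℕ) :
    upperTruncation p x n * p (k + 1) = p k * (upperTruncation p x n * p (k + 1)) := by
  simp only [upperTruncation, Finset.sum_mul, Finset.mul_sum]
  refine Finset.sum_congr rfl fun i _ => ?_
  rcases le_or_gt i k with hik | hki
  · rw [← mul_assoc, ← mul_assoc, ← mul_assoc,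
      ((hp i).le_iff_mul_eq_right (hp k)).1 (hmono hik)]
  · have hzero : (p (i + 1) - p i) * p (k + 1) = 0 := by
      rw [sub_mul, ((hp (k + 1)).le_iff_mul_eq_right (hp (i + 1))).1 (hmono (by omega)),
        ((hp (k + 1)).le_iff_mul_eq_right (hp i)).1 (hmono hki), sub_self]
    rw [mul_assoc, hzero, mul_zero, mul_zero]

lemma upperTruncation_pow_mul_eq_zero (hp0 : p 0 = 0) (n k : ℕ) :
    upperTruncation p x n ^ k * p k = 0 := by
  induction k with
  | zero => rw [hp0, mul_zero]
  | succ k ih =>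
    rw [pow_succ, mul_assoc, upperTruncation_mul_succ hp hmono, ← mul_assoc, ih, zero_mul]

lemma sum_conjugate_mul_star_le (hp0 : p 0 = 0) {δ : ℝ}
    (hδ : ∀ i, ‖(p (i + 1) - p i) * x‖ ^ 2 ≤ δ) (n : ℕ) :
    ∑ i ∈ Finset.range n, (p (i + 1) - p i) * (x * star x) * (p (i + 1) - p i) ≤ δ • p n := by
  have hblock (i : ℕ) : (p (i + 1) - p i) * (x * star x) * (p (i + 1) - p i) ≤
      δ • (p (i + 1) - p i) := by
    set e := p (i + 1) - p i
    have hproj : IsStarProjection e := ((hp i).le_iff_sub (hp (i + 1))).1 (hmono i.le_succ)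
    have hex : e * x * star (e * x) ≤ algebraMap ℝ A δ :=
      CStarAlgebra.mul_star_le_algebraMap_norm_sq.trans (algebraMap_mono A (hδ i))
    have hconj := star_left_conjugate_le_conjugate hex e
    rw [star_mul, hproj.isSelfAdjoint.star_eq, Algebra.algebraMap_eq_smul_one, mul_smul_one,
      smul_mul_assoc, hproj.isIdempotentElem.eq] at hconj
    calc e * (x * star x) * e = e * e * (x * star x) * (e * e) := by
          rw [hproj.isIdempotentElem.eq]
      _ = e * (e * x * (star x * e)) * e := by noncomm_ring
      _ ≤ δ • e := hconj
  calc _ ≤ ∑ i ∈ Finset.range n, δ • (p (i + 1) - p i) := Finset.sum_le_sum fun i _ => hblock i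
    _ = δ • p n := by rw [← Finset.smul_sum, Finset.sum_range_sub, hp0, sub_zero]

lemma mul_star_add_smul_one_le_one_add_upperTruncation (hp0 : p 0 = 0) {n : ℕ} (hpn : p n = 1)
    {δ : ℝ} (hδ : ∀ i, ‖(p (i + 1) - p i) * x‖ ^ 2 ≤ δ) :
    x * star x + (2 - δ) • 1 ≤ (1 + upperTruncation p (x * star x) n) +
      star (1 + upperTruncation p (x * star x) n) := by
  have hdiag := sum_conjugate_mul_star_le hp hmono hp0 hδ n
  have hdecomp := upperTruncation_add_star_add_diagonal (fun i => (hp i).isSelfAdjoint) hp0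
    (IsSelfAdjoint.mul_star_self x) n
  rw [hpn, one_mul, mul_one] at hdecomp
  rw [hpn] at hdiag
  set V := upperTruncation p (x * star x) n
  set D := ∑ i ∈ Finset.range n, (p (i + 1) - p i) * (x * star x) * (p (i + 1) - p i)
  calc x * star x + (2 - δ) • 1 = V + star V + (2 : ℝ) • 1 + (D - δ • 1) := by
        rw [← hdecomp, sub_smul]; abel
    _ ≤ V + star V + (2 : ℝ) • 1 := add_le_of_nonpos_right (sub_nonpos.2 hdiag)
    _ = (1 + V) + star (1 + V) := by rw [star_add, star_one, two_smul]; abel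

end UpperTruncation

section IdealDistance

variable {J : TwoSidedIdeal A}

lemma exists_star_mul_self_le_of_infDist_lt {a : A} {r : ℝ} (ha : Metric.infDist a J < r) :
    ∃ k ∈ J, star a * a ≤ algebraMap ℝ A (r ^ 2) + k := by
  obtain ⟨s, has, hsr⟩ := exists_between ha
  obtain ⟨k, hk, hks⟩ := exists_mem_norm_sub_lt_of_infDist_lt has
  have hs : 0 < s := (norm_nonneg _).trans_lt hks
  have hr : 0 < r := hs.trans hsr
  have ht : 0 < r / s - 1 := sub_pos.2 ((one_lt_div hs).2 hsr)
  refine ⟨(1 + (r / s - 1)⁻¹) • (star k * k),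
    J.asIdeal.smul_of_tower_mem _ (J.mul_mem_left _ _ hk), ?_⟩
  have hnorm : star (a - k) * (a - k) ≤ algebraMap ℝ A (s ^ 2) :=
    (norm_le_iff_star_mul_self_le hs.le).1 hks.le
  have hsum := star_add_mul_add_le (a - k) k ht
  rw [sub_add_cancel, add_sub_cancel] at hsum
  have hrs : r / s * s ^ 2 ≤ r ^ 2 := by
    calc r / s * s ^ 2 = r * s := by field_simp
      _ ≤ r ^ 2 := by nlinarith
  calc star a * a
      ≤ (r / s) • (star (a - k) * (a - k)) + (1 + (r / s - 1)⁻¹) • (star k * k) := hsum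
    _ ≤ algebraMap ℝ A (r / s * s ^ 2) + (1 + (r / s - 1)⁻¹) • (star k * k) := by
        rw [map_mul, ← Algebra.smul_def]
        exact add_le_add (smul_le_smul_of_nonneg_left hnorm (by positivity)) le_rfl
    _ ≤ algebraMap ℝ A (r ^ 2) + (1 + (r / s - 1)⁻¹) • (star k * k) :=
        add_le_add (algebraMap_mono A hrs) le_rfl

lemma exists_one_sub_mem_norm_mul_le {k : A} (hk : k ∈ J) {γ : ℝ} (hγ : 0 < γ) :
    ∃ b, 1 - b ∈ J ∧ ‖b‖ ≤ 1 ∧ ‖k * b‖ ≤ γ := by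
  set y : A := γ⁻¹ • k with hy
  have hyJ : y ∈ J := J.asIdeal.smul_of_tower_mem _ hk
  set v : A := (2⁻¹ : ℝ) • (star y * y) with hv
  have hvJ : v ∈ J := J.asIdeal.smul_of_tower_mem _ (J.mul_mem_left _ _ hyJ)
  have hv0 : 0 ≤ v := smul_nonneg (by norm_num) (star_mul_self_nonneg y)
  obtain ⟨u, hu⟩ : IsUnit (1 + v) := (isStrictlyPositive_one.add_nonneg hv0).isUnit
  have hinv : (1 + v) * ↑u⁻¹ = 1 := by rw [← hu, Units.mul_inv]
  have hsa : star (1 + v) = 1 + v := by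
    rw [star_add, star_one, (IsSelfAdjoint.of_nonneg hv0).star_eq]
  have hinv_sa : star (↑u⁻¹ : A) = ↑u⁻¹ := by
    have hu_sa : star u = u := Units.ext (by rw [Units.coe_star, hu, hsa])
    rw [← Units.coe_star, star_inv, hu_sa]
  have haccr : star y * star (star y) + (2 * 1 : ℝ) • 1 ≤ (1 + v) + star (1 + v) := by
    rw [hsa, star_star, hv]; apply le_of_eq; module
  refine ⟨↑u⁻¹, ?_, ?_, ?_⟩
  · have : 1 - (↑u⁻¹ : A) = v * ↑u⁻¹ := by rw [← hinv]; noncomm_ring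
    exact this ▸ J.mul_mem_right _ _ hvJ
  · simpa using norm_le_inv_of_accretive one_pos hinv haccr
  · have hsq := two_mul_norm_mul_sq_le_one_of_accretive one_pos hinv haccr
    have hyu : ‖y * ↑u⁻¹‖ ≤ 1 := by
      rw [← norm_star, star_mul, hinv_sa]
      nlinarith [norm_nonneg (↑u⁻¹ * star y)]
    rwa [hy, smul_mul_assoc, norm_smul, Real.norm_of_nonneg (inv_nonneg.2 hγ.le),
      inv_mul_le_one₀ hγ] at hyu

lemma infDist_le_of_star_mul_self_le {a k : A} {c : ℝ} (hc : 0 ≤ c) (hk : k ∈ J)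
    (ha : star a * a ≤ algebraMap ℝ A (c ^ 2) + k) : Metric.infDist a J ≤ c := by
  rw [← sq_le_sq₀ Metric.infDist_nonneg hc]
  refine le_of_forall_pos_le_add fun γ hγ => ?_
  obtain ⟨b, hbJ, hb, hkb⟩ := exists_one_sub_mem_norm_mul_le hk hγ
  have hdist : Metric.infDist a J ≤ ‖a * b‖ := infDist_le_norm_of_sub_mem <| by
    simpa only [mul_sub, mul_one] using J.mul_mem_left a _ hbJ
  have hconj : star (a * b) * (a * b) ≤ c ^ 2 • (star b * b) + star b * (k * b) := by
    have := star_left_conjugate_le_conjugate ha b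
    simpa only [star_mul, mul_add, add_mul, mul_assoc, Algebra.algebraMap_eq_smul_one,
      smul_mul_assoc, mul_smul_comm, one_mul] using this
  calc Metric.infDist a J ^ 2 ≤ ‖a * b‖ ^ 2 := pow_le_pow_left₀ Metric.infDist_nonneg hdist 2
    _ = ‖star (a * b) * (a * b)‖ := by rw [CStarRing.norm_star_mul_self, sq]
    _ ≤ ‖c ^ 2 • (star b * b) + star b * (k * b)‖ :=
        CStarAlgebra.norm_le_norm_of_nonneg_of_le (star_mul_self_nonneg _) hconj
    _ ≤ c ^ 2 * (1 * 1) + 1 * γ := by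
        refine (norm_add_le _ _).trans (add_le_add ?_ ?_)
        · rw [norm_smul, Real.norm_of_nonneg (sq_nonneg c), CStarRing.norm_star_mul_self]
          gcongr
        · refine (norm_mul_le _ _).trans ?_
          rw [norm_star]
          gcongr
    _ = c ^ 2 + γ := by ring

lemma infDist_mul_inv_le_one {u z w : A} {d : Aˣ} {r : ℝ}
    (huzw : star u * u = star z * z + star w * w)
    (hd : star (d : A) * d + star z * z = algebraMap ℝ A (r ^ 2)) (hu : Metric.infDist u J < r) :
    Metric.infDist (w * ↑d⁻¹) J ≤ 1 := by
  obtain ⟨k, hk, hle⟩ := exists_star_mul_self_le_of_infDist_lt hu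
  have hw : star w * w ≤ star (d : A) * d + k := by
    rw [huzw, ← hd, add_comm, add_right_comm] at hle
    exact le_of_add_le_add_right hle
  have hconj := star_left_conjugate_le_conjugate hw (↑d⁻¹ : A)
  have hdd : star (↑d⁻¹ : A) * (star (d : A) * d) * ↑d⁻¹ = 1 := by
    rw [← mul_assoc, ← star_mul, Units.mul_inv, star_one, one_mul, Units.mul_inv]
  refine infDist_le_of_star_mul_self_le zero_le_one
    (J.mul_mem_right _ (↑d⁻¹ : A) (J.mul_mem_left (star (↑d⁻¹ : A)) _ hk)) ?_
  rw [mul_add, add_mul, hdd] at hconj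
  simpa only [one_pow, map_one, star_mul, mul_assoc] using hconj

end IdealDistance

section TruncationInverse

variable {J : TwoSidedIdeal A} {σ : Type*} [SetLike σ A] [SubringClass σ A] {S : σ} {p : ℕ → A}
  {n : ℕ}

lemma exists_mem_one_add_upperTruncation_mul_eq_one (hp : ∀ i, IsStarProjection (p i))
    (hmono : Monotone p) (hp0 : p 0 = 0) (hpn : p n = 1)
    (hpS : ∀ i x, p i * x * (p (i + 1) - p i) ∈ S) (x : A) :
    ∃ a ∈ S, (1 + upperTruncation p x n) * a = 1 := by
  have hVS : upperTruncation p x n ∈ S := sum_mem fun i _ => hpS i x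
  have hnil : IsNilpotent (⟨upperTruncation p x n, hVS⟩ : S) := by
    refine ⟨n, Subtype.ext ?_⟩
    simpa [hpn] using upperTruncation_pow_mul_eq_zero (x := x) hp hmono hp0 n n
  obtain ⟨u, hu⟩ := hnil.isUnit_one_add
  refine ⟨(↑u⁻¹ : S), SetLike.coe_mem _, ?_⟩
  simpa [hu] using congrArg Subtype.val u.mul_inv

lemma exists_mem_norm_mul_le_of_norm_block_mul_le (hp : ∀ i, IsStarProjection (p i))
    (hmono : Monotone p) (hp0 : p 0 = 0) (hpn : p n = 1)
    (hpS : ∀ i x, p i * x * (p (i + 1) - p i) ∈ S) {k : A} (hk : k ∈ J) {ε : ℝ} (hε : 0 < ε)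
    (hblock : ∀ i, ‖(p (i + 1) - p i) * k‖ ≤ (ε / (1 + ε)) ^ 2) :
    ∃ a ∈ S, 1 - a ∈ J ∧ ‖a‖ ≤ 1 + ε ∧ ‖a * k‖ ≤ ε := by
  set δ : ℝ := ε / (1 + ε) with hδ
  have hδ0 : 0 < δ := by positivity
  have hδ1 : δ ≤ 1 := (div_le_one (by positivity)).2 (by linarith)
  have hδε : 1 - δ = (1 + ε)⁻¹ := by rw [hδ]; field_simp; ring
  set x : A := δ⁻¹ • k with hx
  have hxJ : x ∈ J := J.asIdeal.smul_of_tower_mem _ hk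
  set V := upperTruncation p (x * star x) n
  have hVJ : V ∈ J := sum_mem fun i _ =>
    J.mul_mem_right _ _ (J.mul_mem_left _ _ (J.mul_mem_right _ _ hxJ))
  have hxblock (i : ℕ) : ‖(p (i + 1) - p i) * x‖ ^ 2 ≤ 2 * δ := by
    have : ‖(p (i + 1) - p i) * x‖ ≤ δ := by
      rw [hx, mul_smul_comm, norm_smul, Real.norm_of_nonneg (inv_nonneg.2 hδ0.le),
        inv_mul_le_iff₀ hδ0, ← sq]
      exact hblock i
    nlinarith [norm_nonneg ((p (i + 1) - p i) * x)]
  obtain ⟨a, haS, ha⟩ :=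
    exists_mem_one_add_upperTruncation_mul_eq_one hp hmono hp0 hpn hpS (x * star x)
  have haccr : x * star x + (2 * (1 + ε)⁻¹) • 1 ≤ (1 + V) + star (1 + V) := by
    rw [← hδε, mul_sub, mul_one]
    exact mul_star_add_smul_one_le_one_add_upperTruncation hp hmono hp0 hpn hxblock
  have hθ : 0 < (1 + ε)⁻¹ := by positivity
  refine ⟨a, haS, ?_, ?_, ?_⟩
  · have : 1 - a = V * a := by rw [← ha]; noncomm_ring
    exact this ▸ J.mul_mem_right _ _ hVJ
  · simpa using norm_le_inv_of_accretive hθ ha haccr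
  · have hax := two_mul_norm_mul_sq_le_one_of_accretive hθ ha haccr
    rw [← div_eq_mul_inv, div_mul_eq_mul_div, div_le_one (by positivity)] at hax
    have hnorm : ‖a * x‖ ≤ 1 + ε := by nlinarith [norm_nonneg (a * x)]
    calc ‖a * k‖ = δ * ‖a * x‖ := by
          rw [hx, mul_smul_comm, norm_smul, Real.norm_of_nonneg (inv_nonneg.2 hδ0.le),
            mul_inv_cancel_left₀ hδ0.ne']
      _ ≤ δ * (1 + ε) := by gcongr
      _ = ε := div_mul_cancel₀ ε (by positivity)

end TruncationInverse

section Correction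

variable {J : TwoSidedIdeal A} {σ : Type*} [SetLike σ A] {S : σ} {p q e y : A} {r : ℝ}

lemma exists_mem_norm_mul_add_mul_lt
    (hS : LeftApproxAnnihilates S J) (hp : IsSelfAdjoint p) (he : IsStarProjection e)
    (hpe : p * e = 0) (hpy : ‖p * y‖ < r) (hdist : Metric.infDist ((p + e) * y) J < r) :
    ∃ a ∈ S, 1 - a ∈ J ∧ ‖p * y + e * (a * (e * y))‖ < r := by
  have horth (z : A) := star_mul_self_add_of_mul_eq_zero y z hp he.isSelfAdjoint hpe
  obtain ⟨s, hs, hsr⟩ := exists_between (max_lt hpy hdist)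
  obtain ⟨hps, hds⟩ := max_lt_iff.1 hs
  have hs0 : 0 < s := (norm_nonneg _).trans_lt hps
  obtain ⟨c, hc, hcr⟩ := exists_between ((one_lt_div hs0).2 hsr)
  obtain ⟨d, hd⟩ := exists_unit_star_mul_self_add_eq hps
  have hcorner : Metric.infDist (e * y * ↑d⁻¹) J < c :=
    (infDist_mul_inv_le_one (by rw [add_mul, horth]) hd hds).trans_lt hc
  obtain ⟨a, haS, haJ, ha⟩ := exists_mem_norm_mul_lt_of_infDist_lt hS hcorner
  have hnorm : ‖e * (a * (e * y)) * ↑d⁻¹‖ ≤ c :=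
    calc ‖e * (a * (e * y)) * ↑d⁻¹‖ = ‖e * (a * (e * y * ↑d⁻¹))‖ := by simp only [mul_assoc]
      _ ≤ 1 * ‖a * (e * y * ↑d⁻¹)‖ :=
        (norm_mul_le _ _).trans (mul_le_mul_of_nonneg_right he.norm_le (norm_nonneg _))
      _ ≤ c := by rw [one_mul]; exact ha.le
  refine ⟨a, haS, haJ, lt_of_le_of_lt ?_ ((lt_div_iff₀ hs0).1 hcr)⟩
  rw [norm_le_iff_star_mul_self_le (by positivity), horth]
  exact star_mul_self_add_le_of_norm_mul_inv_le hd hc.le hnorm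

lemma exists_sub_mem_norm_mul_lt [SubringClass σ A] (hS : LeftApproxAnnihilates S J)
    (hp : IsStarProjection p) (hq : IsStarProjection q) (hpq : p ≤ q) (hpS : p ∈ S) (hqS : q ∈ S)
    (hyS : y ∈ S) (hpy : ‖p * y‖ < r) (hdist : Metric.infDist (q * y) J < r) :
    ∃ y' ∈ S, y - y' ∈ J ∧ p * y' = p * y ∧ ‖q * y'‖ < r := by
  obtain ⟨e, he, heS, hpe, rfl⟩ : ∃ e, IsStarProjection e ∧ e ∈ S ∧ p * e = 0 ∧ p + e = q := by
    refine ⟨q - p, (hp.le_iff_sub hq).1 hpq, sub_mem hqS hpS, ?_, add_sub_cancel p q⟩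
    rw [mul_sub, (hp.le_iff_mul_eq_left hq).1 hpq, hp.isIdempotentElem.eq, sub_self]
  obtain ⟨a, haS, haJ, ha⟩ := exists_mem_norm_mul_add_mul_lt hS hp.isSelfAdjoint he hpe hpy hdist
  have hee (z : A) : e * (e * z) = e * z := by rw [← mul_assoc, he.isIdempotentElem.eq]
  have hpy' : p * (y - e * ((1 - a) * (e * y))) = p * y := by
    rw [mul_sub, ← mul_assoc, hpe, zero_mul, sub_zero]
  have hey' : e * (y - e * ((1 - a) * (e * y))) = e * (a * (e * y)) := by
    rw [mul_sub, hee, sub_mul, one_mul, mul_sub, hee, sub_sub_cancel]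
  refine ⟨y - e * ((1 - a) * (e * y)), ?_, ?_, hpy', ?_⟩
  · exact sub_mem hyS (mul_mem heS (mul_mem (sub_mem (one_mem S) haS) (mul_mem heS hyS)))
  · rw [sub_sub_cancel]
    exact J.mul_mem_left _ _ (J.mul_mem_right _ _ haJ)
  · rwa [add_mul, hpy', hey']

lemma exists_seq_mem_norm_mul_lt [SubringClass σ A] (hS : LeftApproxAnnihilates S J)
    {p : ℕ → A} (hp : ∀ n, IsStarProjection (p n)) (hmono : Monotone p) (hp0 : p 0 = 0)
    (hpS : ∀ n, p n ∈ S) {x : A} (hxS : x ∈ S) (hdist : ∀ n, Metric.infDist (p n * x) J < r) :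
    ∃ y : ℕ → A, ∀ n, y n ∈ S ∧ x - y n ∈ J ∧ ‖p n * y n‖ < r ∧ p n * y (n + 1) = p n * y n := by
  let P (n : ℕ) (y : A) : Prop := y ∈ S ∧ x - y ∈ J ∧ ‖p n * y‖ < r
  have hzero : P 0 x := by
    refine ⟨hxS, by simp only [sub_self, J.zero_mem], ?_⟩
    rw [hp0, zero_mul, norm_zero]
    exact Metric.infDist_nonneg.trans_lt (hdist 0)
  have hsucc (n : ℕ) (y : {y // P n y}) : ∃ y' : {y // P (n + 1) y}, p n * y' = p n * y := by
    obtain ⟨y, hyS, hyJ, hy⟩ := y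
    have hdist' : Metric.infDist (p (n + 1) * y) J < r := by
      rw [← infDist_eq_of_sub_mem (mul_sub (p (n + 1)) x y ▸ J.mul_mem_left _ _ hyJ)]
      exact hdist (n + 1)
    obtain ⟨y', hy'S, hyy', heq, hlt⟩ := exists_sub_mem_norm_mul_lt hS (hp n) (hp (n + 1))
      (hmono n.le_succ) (hpS n) (hpS (n + 1)) hyS hy hdist'
    exact ⟨⟨y', hy'S, sub_add_sub_cancel x y y' ▸ J.add_mem hyJ hyy', hlt⟩, heq⟩
  choose next hnext using hsucc
  let y (n : ℕ) : {y // P n y} := Nat.rec ⟨x, hzero⟩ next n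
  refine ⟨fun n => (y n).1, fun n => ?_⟩
  obtain ⟨hyS, hyJ, hy⟩ := (y n).2
  exact ⟨hyS, hyJ, hy, hnext n (y n)⟩

end Correction

end CStarAlgebra

lemma mul_eq_mul_of_mul_succ_eq {M : Type*} [Semigroup M] {p y : ℕ → M}
    (hp : ∀ m n, m ≤ n → p m * p n = p m) (hy : ∀ n, p n * y (n + 1) = p n * y n) {m n : ℕ}
    (hmn : m ≤ n) : p m * y n = p m * y m := by
  induction n, hmn using Nat.le_induction with
  | base => rfl
  | succ n hmn ih => rw [← hp m n hmn, mul_assoc, hy, ← mul_assoc, hp m n hmn, ih]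

section StrongLimits

variable {𝕜 E F : Type*} [RCLike 𝕜]

lemma cauchySeq_of_norm_sub_sq_le [SeminormedAddCommGroup E] {u : ℕ → E} {c : ℝ}
    (hu : ∀ m n, m ≤ n → ‖u n - u m‖ ^ 2 ≤ ‖u n‖ ^ 2 - ‖u m‖ ^ 2) (hc : ∀ n, ‖u n‖ ≤ c) :
    CauchySeq u := by
  have hmono : Monotone fun n => ‖u n‖ ^ 2 := fun m n hmn =>
    sub_nonneg.1 ((sq_nonneg _).trans (hu m n hmn))
  have hbdd : BddAbove (range fun n => ‖u n‖ ^ 2) :=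
    ⟨c ^ 2, forall_mem_range.2 fun n => pow_le_pow_left₀ (norm_nonneg _) (hc n) 2⟩
  have hcauchy := (tendsto_atTop_ciSup hmono hbdd).cauchySeq
  refine Metric.cauchySeq_iff'.2 fun ε hε => ?_
  obtain ⟨m, hm⟩ := Metric.cauchySeq_iff'.1 hcauchy (ε ^ 2) (by positivity)
  refine ⟨m, fun n hmn => ?_⟩
  rw [dist_eq_norm, ← sq_lt_sq₀ (norm_nonneg _) hε.le]
  exact (hu m n hmn).trans_lt ((le_abs_self _).trans_lt (hm n hmn))

variable [NormedAddCommGroup E] [InnerProductSpace 𝕜 E] [CompleteSpace E]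

lemma norm_sub_sq_of_isStarProjection {p : E →L[𝕜] E} (hp : IsStarProjection p) (x : E) :
    ‖x - p x‖ ^ 2 = ‖x‖ ^ 2 - ‖p x‖ ^ 2 := by
  obtain ⟨K, _, rfl⟩ := isStarProjection_iff_eq_starProjection.1 hp
  rw [← K.starProjection_orthogonal_val, eq_sub_iff_add_eq',
    ← K.norm_sq_eq_add_norm_sq_starProjection]

lemma exists_tendsto_of_coherent [NormedAddCommGroup F] [NormedSpace 𝕜 F]
    {p : ℕ → E →L[𝕜] E} {z : ℕ → F →L[𝕜] E} {c : ℝ}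
    (hp : ∀ n, IsStarProjection (p n)) (hz : ∀ m n, m ≤ n → p m ∘L z n = z m)
    (hc : ∀ n, ‖z n‖ ≤ c) :
    ∃ l : F →L[𝕜] E, ‖l‖ ≤ c ∧ (∀ x, Tendsto (fun n => z n x) atTop (𝓝 (l x))) ∧
      ∀ n, p n ∘L l = z n := by
  have hlim (x : F) : ∃ y, Tendsto (fun n => z n x) atTop (𝓝 y) := by
    refine cauchySeq_tendsto_of_complete (cauchySeq_of_norm_sub_sq_le (c := c * ‖x‖)
      (fun m n hmn => ?_) fun n => (z n).le_of_opNorm_le (hc n) x)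
    rw [← hz m n hmn]
    exact (norm_sub_sq_of_isStarProjection (hp m) (z n x)).le
  choose f hf using hlim
  have hbound (x : F) : ‖f x‖ ≤ c * ‖x‖ :=
    le_of_tendsto (hf x).norm (Eventually.of_forall fun n => (z n).le_of_opNorm_le (hc n) x)
  refine ⟨(linearMapOfTendsto f (fun n => (z n : F →ₗ[𝕜] E)) (tendsto_pi_nhds.2 hf)).mkContinuous c
    hbound, LinearMap.mkContinuous_norm_le _ ((norm_nonneg _).trans (hc 0)) _, hf, fun n => ?_⟩
  ext x
  refine tendsto_nhds_unique (((p n).continuous.tendsto _).comp (hf x)) ?_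
  refine tendsto_const_nhds.congr' ((eventually_ge_atTop n).mono fun m hnm => ?_)
  exact (DFunLike.congr_fun (hz n m hnm) x).symm

end StrongLimits

section CompactOperators

variable (𝕜 E : Type*) [NontriviallyNormedField 𝕜] [NormedAddCommGroup E] [NormedSpace 𝕜 E]

/-- The two-sided ideal of compact operators in the ring of bounded operators on `E`, so that the
essential norm becomes the distance to an ideal of a C⋆-algebra. -/
def compactOperatorIdeal : TwoSidedIdeal (E →L[𝕜] E) :=
  .mk' {K | IsCompactOperator K} isCompactOperator_zero .add .neg (fun hK => hK.clm_comp _)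
    (fun hK => hK.comp_clm _)

variable {𝕜 E}

lemma mem_compactOperatorIdeal {K : E →L[𝕜] E} :
    K ∈ compactOperatorIdeal 𝕜 E ↔ IsCompactOperator K :=
  TwoSidedIdeal.mem_mk' ..

lemma infDist_compactOperatorIdeal (T : H →L[ℂ] H) :
    Metric.infDist T (compactOperatorIdeal ℂ H) = essNorm T := by
  have hcoe : (compactOperatorIdeal ℂ H : Set (H →L[ℂ] H)) =
      {K : H →L[ℂ] H | IsCompactOperator K} := Set.ext fun _ => mem_compactOperatorIdeal
  rw [hcoe, essNorm]

lemma uniformContinuousOn_comp_of_isCompactOperator {𝕜 X E F G : Type*} [RCLike 𝕜]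
    [PseudoMetricSpace X] [NormedAddCommGroup E] [NormedSpace 𝕜 E] [NormedAddCommGroup F]
    [NormedSpace 𝕜 F] [NormedAddCommGroup G] [NormedSpace 𝕜 G] {s : Set X} (hs : IsCompact s)
    {T : X → F →L[𝕜] G} {C : NNReal} (hC : ∀ t ∈ s, ‖T t‖₊ ≤ C)
    (hT : ∀ y, ContinuousOn (fun t => T t y) s) {K : E →L[𝕜] F} (hK : IsCompactOperator K) :
    UniformContinuousOn (fun t => T t ∘L K) s := by
  have hjoint : ContinuousOn (fun q : X × F => T q.1 q.2) (s ×ˢ univ) :=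
    continuousOn_prod_of_continuousOn_lipschitzOnWith' _ C
      (fun t ht => ((T t).lipschitz.weaken (hC t ht)).lipschitzOnWith) fun y _ => hT y
  have hcompact := hs.prod (hK.isCompact_closure_image_closedBall 1)
  have hunif := hcompact.uniformContinuousOn_of_continuous
    (hjoint.mono (prod_mono_right (subset_univ _)))
  rw [Metric.uniformContinuousOn_iff_le] at hunif ⊢
  intro γ hγ
  obtain ⟨η, hη, hclose⟩ := hunif γ hγ
  refine ⟨η, hη, fun a ha b hb hab => ?_⟩
  rw [dist_eq_norm]
  refine ContinuousLinearMap.opNorm_le_of_unit_norm hγ.le fun x hx => ?_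
  have hKx : K x ∈ closure (K '' Metric.closedBall 0 1) :=
    subset_closure (mem_image_of_mem K (mem_closedBall_zero_iff.2 hx.le))
  have hdist : dist (a, K x) (b, K x) ≤ η := by simpa [Prod.dist_eq, hη.le] using hab
  simpa only [dist_eq_norm] using! hclose (a, K x) ⟨ha, hKx⟩ (b, K x) ⟨hb, hKx⟩ hdist

end CompactOperators

namespace ContinuousNest

variable {𝒩 : ContinuousNest H} {s t : ℝ}

lemma isStarProjection (ht : t ∈ Icc (0 : ℝ) 1) : IsStarProjection (𝒩.N t) :=
  ⟨𝒩.idem t ht, 𝒩.selfAdjoint t ht⟩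

lemma monotoneOn : MonotoneOn 𝒩.N (Icc 0 1) := by
  intro s hs t ht hst
  rcases hst.eq_or_lt with rfl | hlt
  · exact le_rfl
  · rw [(isStarProjection hs).le_iff_mul_eq_right (isStarProjection ht)]
    ext x
    obtain ⟨y, hy⟩ := (𝒩.range_lt s t hs ht hlt).le ⟨x, rfl⟩
    have hy' : 𝒩.N t y = 𝒩.N s x := hy
    rw [mul_apply_eq_comp, ← hy']
    exact DFunLike.congr_fun (𝒩.idem t ht).eq y

lemma N_mul_N_of_le (hs : s ∈ Icc (0 : ℝ) 1) (ht : t ∈ Icc (0 : ℝ) 1) (hst : s ≤ t) :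
    𝒩.N t * 𝒩.N s = 𝒩.N s :=
  ((isStarProjection hs).le_iff_mul_eq_right (isStarProjection ht)).1 (monotoneOn hs ht hst)

lemma N_mul_N_of_ge (hs : s ∈ Icc (0 : ℝ) 1) (ht : t ∈ Icc (0 : ℝ) 1) (hst : s ≤ t) :
    𝒩.N s * 𝒩.N t = 𝒩.N s :=
  ((isStarProjection hs).le_iff_mul_eq_left (isStarProjection ht)).1 (monotoneOn hs ht hst)

lemma mul_N_of_mem_alg {T : H →L[ℂ] H} (hT : T ∈ 𝒩.alg) (ht : t ∈ Icc (0 : ℝ) 1) :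
    T * 𝒩.N t = 𝒩.N t * (T * 𝒩.N t) := by
  simpa only [sub_mul, one_mul, sub_eq_zero, mul_assoc] using hT t ht

variable (𝒩)

/-- The nest algebra `𝒩.alg` as a subalgebra of the bounded operators, for its closure
properties. -/
def nestAlgebra : Subalgebra ℂ (H →L[ℂ] H) where
  carrier := 𝒩.alg
  mul_mem' {S T} hS hT t ht := by
    rw [mul_assoc, mul_assoc, mul_N_of_mem_alg hT ht, ← mul_assoc, ← mul_assoc, hS t ht, zero_mul]
  add_mem' {S T} hS hT t ht := by rw [mul_add, add_mul, hS t ht, hT t ht, add_zero]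
  algebraMap_mem' c t ht := by
    rw [Algebra.algebraMap_eq_smul_one, mul_smul_comm, mul_one, smul_mul_assoc,
      (isStarProjection ht).one_sub_mul_self, smul_zero]

variable {𝒩}

lemma mul_mul_sub_mem_nestAlgebra (hs : s ∈ Icc (0 : ℝ) 1) (ht : t ∈ Icc (0 : ℝ) 1) (hst : s ≤ t)
    (T : H →L[ℂ] H) : 𝒩.N s * T * (𝒩.N t - 𝒩.N s) ∈ 𝒩.nestAlgebra := by
  intro u hu
  rcases le_total s u with hsu | hus
  · have hleft : (1 - 𝒩.N u) * 𝒩.N s = 0 := by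
      rw [sub_mul, one_mul, N_mul_N_of_le hs hu hsu, sub_self]
    rw [mul_assoc (𝒩.N s), ← mul_assoc (1 - _), hleft, zero_mul, zero_mul]
  · have hright : (𝒩.N t - 𝒩.N s) * 𝒩.N u = 0 := by
      rw [sub_mul, N_mul_N_of_le hu ht (hus.trans hst), N_mul_N_of_le hu hs hus, sub_self]
    rw [mul_assoc, mul_assoc (𝒩.N s * T), hright, mul_zero, mul_zero]

lemma N_mem_nestAlgebra (hs : s ∈ Icc (0 : ℝ) 1) : 𝒩.N s ∈ 𝒩.nestAlgebra := by
  intro u hu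
  rw [sub_mul, one_mul, sub_mul, sub_eq_zero]
  rcases le_total s u with hsu | hus
  · rw [N_mul_N_of_le hs hu hsu]
  · rw [N_mul_N_of_le hu hs hus, N_mul_N_of_ge hu hs hus, (isStarProjection hu).isIdempotentElem.eq]

lemma mem_nestAlgebra_of_tendsto {T : ℕ → H →L[ℂ] H} {L : H →L[ℂ] H}
    (hT : ∀ n, T n ∈ 𝒩.nestAlgebra) (hL : ∀ x, Tendsto (fun n => T n x) atTop (𝓝 (L x))) :
    L ∈ 𝒩.nestAlgebra := by
  intro t ht
  ext x
  refine tendsto_nhds_unique (((1 - 𝒩.N t).continuous.tendsto _).comp (hL (𝒩.N t x))) ?_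
  refine tendsto_const_nhds.congr fun n => ?_
  exact (DFunLike.congr_fun (hT n t ht) x).symm

lemma uniformContinuousOn_N_mul {K : H →L[ℂ] H} (hK : IsCompactOperator K) :
    UniformContinuousOn (fun t => 𝒩.N t * K) (Icc 0 1) :=
  uniformContinuousOn_comp_of_isCompactOperator isCompact_Icc (C := 1)
    (fun _ ht => (isStarProjection ht).norm_le) 𝒩.contOn hK

variable (𝒩) in
lemma leftApproxAnnihilates_nestAlgebra :
    LeftApproxAnnihilates 𝒩.nestAlgebra (compactOperatorIdeal ℂ H) := by
  intro K hK ε hε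
  obtain ⟨η, hη, hclose⟩ := Metric.uniformContinuousOn_iff_le.1
    (uniformContinuousOn_N_mul (𝒩 := 𝒩) (mem_compactOperatorIdeal.1 hK)) ((ε / (1 + ε)) ^ 2)
    (by positivity)
  obtain ⟨m, hm⟩ := exists_nat_one_div_lt hη
  let τ (i : ℕ) : ℝ := min (i / (m + 1)) 1
  have hτ (i : ℕ) : τ i ∈ Icc (0 : ℝ) 1 := ⟨by positivity, min_le_right _ _⟩
  have hτ_mono : Monotone τ := fun i j hij => by dsimp only [τ]; gcongr
  have hτ_dist (i : ℕ) : dist (τ (i + 1)) (τ i) ≤ η := by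
    refine (abs_min_sub_min_le_max _ _ _ _).trans (max_le ?_ (by simpa using hη.le))
    rw [← sub_div, Nat.cast_succ, add_sub_cancel_left, abs_of_pos (by positivity)]
    exact hm.le
  refine exists_mem_norm_mul_le_of_norm_block_mul_le (p := fun i => 𝒩.N (τ i)) (n := m + 1)
    (fun i => isStarProjection (hτ i)) (fun i j hij => monotoneOn (hτ i) (hτ j) (hτ_mono hij))
    (by simp [τ, 𝒩.N_zero]) ?_
    (fun i T => mul_mul_sub_mem_nestAlgebra (hτ i) (hτ (i + 1)) (hτ_mono i.le_succ) T) hK hε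
    fun i => ?_
  · have : τ (m + 1) = 1 := by simp [τ, div_self (Nat.cast_add_one_ne_zero (R := ℝ) m)]
    rw [this, 𝒩.N_one]
  · rw [sub_mul, ← dist_eq_norm]
    exact hclose _ (hτ (i + 1)) _ (hτ i) (hτ_dist i)

variable (𝒩) in
/-- The ideal `K₊` of the nest algebra: the operators whose rows beyond `N t` form a compact
operator, for every `t > 0`. -/
def kPlus : Set (H →L[ℂ] H) :=
  {K | K ∈ 𝒩.alg ∧ ∀ t : ℝ, 0 < t → t ≤ 1 → IsCompactOperator ⇑((1 - 𝒩.N t) * K)}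

variable {X : H →L[ℂ] H} {r : ℝ}

lemma kPlus_nonempty : 𝒩.kPlus.Nonempty :=
  ⟨0, 𝒩.nestAlgebra.zero_mem, fun t _ _ => by simpa using isCompactOperator_zero⟩

lemma one_sub_N_mul_mul_one_sub_N (hX : X ∈ 𝒩.alg) (ht : t ∈ Icc (0 : ℝ) 1) :
    (1 - 𝒩.N t) * X * (1 - 𝒩.N t) = (1 - 𝒩.N t) * X := by
  rw [mul_sub, mul_one, hX t ht, sub_zero]

lemma essNorm_one_sub_N_mul_le_dist {K : H →L[ℂ] H} (ht : t ∈ Ioc (0 : ℝ) 1) (hK : K ∈ 𝒩.kPlus) :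
    essNorm ((1 - 𝒩.N t) * X) ≤ dist X K := by
  have hcompact : (1 - 𝒩.N t) * X - (1 - 𝒩.N t) * (X - K) ∈ compactOperatorIdeal ℂ H := by
    rw [mul_sub, sub_sub_cancel]
    exact mem_compactOperatorIdeal.2 (hK.2 t ht.1 ht.2)
  calc essNorm ((1 - 𝒩.N t) * X) ≤ ‖(1 - 𝒩.N t) * (X - K)‖ := by
        rw [← infDist_compactOperatorIdeal]
        exact infDist_le_norm_of_sub_mem hcompact
    _ ≤ ‖1 - 𝒩.N t‖ * ‖X - K‖ := norm_mul_le _ _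
    _ ≤ 1 * ‖X - K‖ := by
        gcongr
        exact (isStarProjection (Ioc_subset_Icc_self ht)).one_sub.norm_le
    _ = dist X K := by rw [one_mul, dist_eq_norm]

lemma mem_kPlus_of_forall_one_sub_N_mul_mem {K : H →L[ℂ] H} (hK : K ∈ 𝒩.alg)
    (h : ∀ n : ℕ, (1 - 𝒩.N (1 / (n + 1))) * K ∈ compactOperatorIdeal ℂ H) : K ∈ 𝒩.kPlus := by
  refine ⟨hK, fun t ht0 ht1 => mem_compactOperatorIdeal.1 ?_⟩
  obtain ⟨n, hn⟩ := exists_nat_one_div_lt ht0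
  have hn_mem : (1 / (n + 1) : ℝ) ∈ Icc (0 : ℝ) 1 := ⟨by positivity, hn.le.trans ht1⟩
  have hle : 1 - 𝒩.N t ≤ 1 - 𝒩.N (1 / (n + 1)) :=
    sub_le_sub_left (monotoneOn hn_mem ⟨ht0.le, ht1⟩ hn.le) 1
  have habsorb : (1 - 𝒩.N t) * (1 - 𝒩.N (1 / (n + 1))) = 1 - 𝒩.N t :=
    ((isStarProjection ⟨ht0.le, ht1⟩).one_sub.le_iff_mul_eq_left
      (isStarProjection hn_mem).one_sub).1 hle
  rw [← habsorb, mul_assoc]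
  exact (compactOperatorIdeal ℂ H).mul_mem_left _ _ (h n)

lemma exists_mem_nestAlgebra_norm_le {p : ℕ → H →L[ℂ] H} (hp : ∀ n, IsStarProjection (p n))
    (hmono : Monotone p) (hp0 : p 0 = 0) (hpS : ∀ n, p n ∈ 𝒩.nestAlgebra)
    (hX : X ∈ 𝒩.nestAlgebra)
    (hr : ∀ n, Metric.infDist (p n * X) (compactOperatorIdeal ℂ H) < r) :
    ∃ L ∈ 𝒩.nestAlgebra, ‖L‖ ≤ r ∧ ∀ n, p n * (X - L) ∈ compactOperatorIdeal ℂ H := by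
  obtain ⟨y, hy⟩ :=
    exists_seq_mem_norm_mul_lt 𝒩.leftApproxAnnihilates_nestAlgebra hp hmono hp0 hpS hX hr
  have habsorb (m n : ℕ) (hmn : m ≤ n) : p m * p n = p m :=
    ((hp m).le_iff_mul_eq_left (hp n)).1 (hmono hmn)
  have hcoherent (m n : ℕ) (hmn : m ≤ n) : p m * (p n * y n) = p m * y m := by
    rw [← mul_assoc, habsorb m n hmn]
    exact mul_eq_mul_of_mul_succ_eq habsorb (fun k => (hy k).2.2.2) hmn
  obtain ⟨L, hLr, hL, hpL⟩ := exists_tendsto_of_coherent hp hcoherent fun n => (hy n).2.2.1.le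
  have hzS (n : ℕ) : p n * y n ∈ 𝒩.nestAlgebra := mul_mem (hpS n) (hy n).1
  refine ⟨L, mem_nestAlgebra_of_tendsto hzS hL, hLr, fun n => ?_⟩
  have hcut : p n * (X - L) = p n * (X - y n) := by
    rw [mul_sub, mul_sub]
    exact congrArg _ (hpL n)
  exact hcut ▸ (compactOperatorIdeal ℂ H).mul_mem_left _ _ (hy n).2.1

lemma exists_mem_kPlus_dist_le (hX : X ∈ 𝒩.alg)
    (hr : ∀ t ∈ Ioc (0 : ℝ) 1, essNorm ((1 - 𝒩.N t) * X) < r) : ∃ K ∈ 𝒩.kPlus, dist X K ≤ r := by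
  have hmem (n : ℕ) : (1 / (n + 1) : ℝ) ∈ Ioc (0 : ℝ) 1 :=
    ⟨Nat.one_div_pos_of_nat, by simpa using Nat.one_div_le_one_div (α := ℝ) n.zero_le⟩
  have hmem' (n : ℕ) : (1 / (n + 1) : ℝ) ∈ Icc (0 : ℝ) 1 := Ioc_subset_Icc_self (hmem n)
  have hmono : Monotone fun n : ℕ => 1 - 𝒩.N (1 / (n + 1)) := fun m n hmn =>
    sub_le_sub_left (monotoneOn (hmem' n) (hmem' m) (Nat.one_div_le_one_div hmn)) 1
  obtain ⟨L, hL, hLr, hcompact⟩ := exists_mem_nestAlgebra_norm_le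
    (fun n => (isStarProjection (hmem' n)).one_sub) hmono (by simp [𝒩.N_one])
    (fun n => sub_mem (one_mem _) (N_mem_nestAlgebra (hmem' n))) hX
    fun n => (infDist_compactOperatorIdeal _).trans_lt (hr _ (hmem n))
  have hXL : X - L ∈ 𝒩.kPlus :=
    mem_kPlus_of_forall_one_sub_N_mul_mem (𝒩.nestAlgebra.sub_mem hX hL) hcompact
  exact ⟨X - L, hXL, by rwa [dist_eq_norm, sub_sub_cancel]⟩

end ContinuousNest

theorem stmt9_general (𝒩 : ContinuousNest H) {X : H →L[ℂ] H} (hX : X ∈ 𝒩.alg) :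
    Metric.infDist X 𝒩.kPlus =
      ⨆ t : Ioc (0 : ℝ) 1, essNorm ((1 - 𝒩.N t.1) * X * (1 - 𝒩.N t.1)) := by
  have hcompress (t : Ioc (0 : ℝ) 1) : (1 - 𝒩.N t.1) * X * (1 - 𝒩.N t.1) = (1 - 𝒩.N t.1) * X :=
    ContinuousNest.one_sub_N_mul_mul_one_sub_N hX (Ioc_subset_Icc_self t.2)
  simp only [hcompress]
  have hle (t : Ioc (0 : ℝ) 1) : essNorm ((1 - 𝒩.N t.1) * X) ≤ Metric.infDist X 𝒩.kPlus :=
    (Metric.le_infDist ContinuousNest.kPlus_nonempty).2 fun _ hK =>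
      ContinuousNest.essNorm_one_sub_N_mul_le_dist t.2 hK
  have hbdd : BddAbove (range fun t : Ioc (0 : ℝ) 1 => essNorm ((1 - 𝒩.N t.1) * X)) :=
    ⟨_, forall_mem_range.2 hle⟩
  have : Nonempty (Ioc (0 : ℝ) 1) := ⟨1, zero_lt_one, le_rfl⟩
  refine le_antisymm (le_of_forall_gt_imp_ge_of_dense fun r hr => ?_) (ciSup_le hle)
  obtain ⟨K, hK, hXK⟩ := ContinuousNest.exists_mem_kPlus_dist_le hX fun t ht =>
    (le_ciSup hbdd ⟨t, ht⟩).trans_lt hr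
  exact (Metric.infDist_le_dist_of_mem hK).trans hXK

/-- Quotient norm formula for
`K₊ = {X ∈ Alg 𝒩 : (1 - N(t)) X is compact for every t > 0}`:
`dist(X, K₊) = sup_{0 < t ≤ 1} ‖(1 - N(t)) X (1 - N(t))‖ₑ`. -/
theorem stmt9 {H : Type*} [NormedAddCommGroup H] [InnerProductSpace ℂ H] [CompleteSpace H]
    [TopologicalSpace.SeparableSpace H] (hH : ¬FiniteDimensional ℂ H)
    (𝒩 : ContinuousNest H) (X : H →L[ℂ] H) (hX : X ∈ 𝒩.alg) :
    Metric.infDist X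
        {K | K ∈ 𝒩.alg ∧ ∀ t : ℝ, 0 < t → t ≤ 1 → IsCompactOperator ⇑((1 - 𝒩.N t) * K)} =
      ⨆ t : Ioc (0 : ℝ) 1, essNorm ((1 - 𝒩.N t.1) * X * (1 - 𝒩.N t.1)) :=
  stmt9_general 𝒩 hX
end

section
/- Let P be a collection of nonempty bounded open intervals of ℝ with ∪P = (a,b) for real numbers a < b. Then the following are equivalent: (1) there exists x > a with L_P(x) = a; (2) there is an inner cover of (a,b) with respect to P having a least element. -/
open Set

/-- A linked list of (nonempty bounded open) intervals `(a i, b i)` of `ℝ`, indexed by a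
nonempty set `S` of consecutive integers, consecutive intervals overlapping and the chain
condition `a i < b (i-1) < a (i+1) < b i` holding whenever the indices involved lie in `S`. -/
structure LinkedList where
  S : Set ℤ
  nonempty : S.Nonempty
  consecutive : ∀ i ∈ S, ∀ k ∈ S, ∀ j : ℤ, i ≤ j → j ≤ k → j ∈ S
  a : ℤ → ℝ
  b : ℤ → ℝ
  lt : ∀ i ∈ S, a i < b i
  mono_a : ∀ i : ℤ, i ∈ S → i + 1 ∈ S → a i < a (i + 1)
  mono_b : ∀ i : ℤ, i ∈ S → i + 1 ∈ S → b i < b (i + 1)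
  overlap : ∀ i : ℤ, i ∈ S → i + 1 ∈ S → a (i + 1) < b i
  gap : ∀ i : ℤ, i ∈ S → i + 2 ∈ S → b i < a (i + 2)

namespace LinkedList

/-- The `i`-th interval of the list. -/
def interval (L : LinkedList) (i : ℤ) : Set ℝ := Ioo (L.a i) (L.b i)

/-- The union of the intervals of the list. -/
def union (L : LinkedList) : Set ℝ := ⋃ i ∈ L.S, L.interval i

/-- The list has a least element. -/
def HasLeast (L : LinkedList) : Prop := ∃ i ∈ L.S, ∀ j ∈ L.S, i ≤ j

/-- The list has a greatest element. -/
def HasGreatest (L : LinkedList) : Prop := ∃ i ∈ L.S, ∀ j ∈ L.S, j ≤ i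

end LinkedList

/-- `P` is a collection of nonempty bounded open intervals of `ℝ`. -/
def IsIntervalCollection (P : Set (Set ℝ)) : Prop :=
  ∀ J ∈ P, ∃ c d : ℝ, c < d ∧ J = Ioo c d

/-- An interval is dominated by `P` if it is contained in some member of `P`. -/
def Dominated (P : Set (Set ℝ)) (J : Set ℝ) : Prop := ∃ K ∈ P, J ⊆ K

/-- An interval is approximately dominated by `P` if it is the union of an increasing
sequence of intervals, each dominated by `P`. -/
def ApproxDominated (P : Set (Set ℝ)) (J : Set ℝ) : Prop :=
  ∃ c d : ℕ → ℝ, (∀ n, c n < d n) ∧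
    (∀ n, Ioo (c n) (d n) ⊆ Ioo (c (n + 1)) (d (n + 1))) ∧
    (∀ n, Dominated P (Ioo (c n) (d n))) ∧ J = ⋃ n, Ioo (c n) (d n)

/-- An inner cover of `(x, y)` with respect to `P`: a linked list with union `(x, y)`, each of
whose intervals is approximately dominated by `P`. -/
def IsInnerCover (P : Set (Set ℝ)) (x y : ℝ) (L : LinkedList) : Prop :=
  L.union = Ioo x y ∧ ∀ i ∈ L.S, ApproxDominated P (L.interval i)

/-- An outer cover of `(x, y)` with respect to `P`: a linked list with union `(x, y)` such that
every member of `P` is contained in some interval of the list. -/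
def IsOuterCover (P : Set (Set ℝ)) (x y : ℝ) (L : LinkedList) : Prop :=
  L.union = Ioo x y ∧ ∀ J ∈ P, ∃ i ∈ L.S, J ⊆ L.interval i

/-- `L_P(x)`: the infimum of left endpoints of members of `P` containing `x`. -/
noncomputable def leftEnd (P : Set (Set ℝ)) (x : ℝ) : ℝ :=
  sInf {c | ∃ d, Ioo c d ∈ P ∧ x ∈ Ioo c d}

/-- `R_P(x)`: the supremum of right endpoints of members of `P` containing `x`. -/
noncomputable def rightEnd (P : Set (Set ℝ)) (x : ℝ) : ℝ :=
  sSup {d | ∃ c, Ioo c d ∈ P ∧ x ∈ Ioo c d}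

/-!
The interval of least index in an inner cover has left endpoint `a` and is exhausted by an
increasing sequence of dominated intervals, so `L_P = a` on the first of them. Conversely, if
`L_P(x) = a`, then `(a, x)` is approximately dominated, and it remains to continue it to the right.
The map `t ↦ t + ρ(t) / 4`, where `ρ(t)` is the supremum of the radii of dominated balls about `t`,
is continuous and has no fixed point in `(a, b)`, so its iterates increase to `b`; since `ρ` is
1-Lipschitz, three consecutive steps stay in a dominated ball.
-/

open Function Metric

section LebesgueRadius

variable {X : Type*} [PseudoMetricSpace X] {P : Set (Set X)}

/-- The pointwise Lebesgue number of the cover `P` at `x`: the supremum of the distances from `x`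
to the complements of the members of `P`. The supremum is only meaningful if `P` does not cover the
whole space, for otherwise it may be unbounded and `infDist x ∅ = 0` may enter it. -/
noncomputable def lebesgueRadius (P : Set (Set X)) (x : X) : ℝ :=
  ⨆ K : P, infDist x (K : Set X)ᶜ

theorem lebesgueRadius_nonneg (P : Set (Set X)) (x : X) : 0 ≤ lebesgueRadius P x :=
  Real.iSup_nonneg fun _ => infDist_nonneg

theorem infDist_compl_le_infDist_compl_sUnion {K : Set X} (hP : (⋃₀ P)ᶜ.Nonempty) (hK : K ∈ P)
    (x : X) : infDist x Kᶜ ≤ infDist x (⋃₀ P)ᶜ :=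
  infDist_le_infDist_of_subset (compl_subset_compl.2 (subset_sUnion_of_mem hK)) hP

theorem lebesgueRadius_le_infDist_compl_sUnion (hP : (⋃₀ P)ᶜ.Nonempty) (x : X) :
    lebesgueRadius P x ≤ infDist x (⋃₀ P)ᶜ :=
  Real.iSup_le (fun K => infDist_compl_le_infDist_compl_sUnion hP K.2 x) infDist_nonneg

theorem infDist_compl_le_lebesgueRadius {K : Set X} (hP : (⋃₀ P)ᶜ.Nonempty) (hK : K ∈ P) (x : X) :
    infDist x Kᶜ ≤ lebesgueRadius P x :=
  le_ciSup (f := fun K : P => infDist x (K : Set X)ᶜ)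
    ⟨_, forall_mem_range.2 fun K => infDist_compl_le_infDist_compl_sUnion hP K.2 x⟩ ⟨K, hK⟩

theorem lipschitzWith_lebesgueRadius (hP : (⋃₀ P)ᶜ.Nonempty) :
    LipschitzWith 1 (lebesgueRadius P) :=
  .of_le_add fun _ y => Real.iSup_le
    (fun K => infDist_le_infDist_add_dist.trans <|
      add_le_add_left (infDist_compl_le_lebesgueRadius hP K.2 y) _)
    (add_nonneg (lebesgueRadius_nonneg P y) dist_nonneg)

theorem lebesgueRadius_pos (hP : (⋃₀ P)ᶜ.Nonempty) (hopen : ∀ K ∈ P, IsOpen K) {x : X}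
    (hx : x ∈ ⋃₀ P) : 0 < lebesgueRadius P x := by
  obtain ⟨K, hK, hxK⟩ := hx
  have hne : Kᶜ.Nonempty := hP.mono (compl_subset_compl.2 (subset_sUnion_of_mem hK))
  exact (((hopen K hK).isClosed_compl.notMem_iff_infDist_pos hne).1 (not_not_intro hxK)).trans_le
    (infDist_compl_le_lebesgueRadius hP hK x)

theorem exists_ball_subset_of_lt_lebesgueRadius {x : X} {r : ℝ} (hr : 0 ≤ r)
    (h : r < lebesgueRadius P x) : ∃ K ∈ P, ball x r ⊆ K := by
  by_contra! hsub
  refine h.not_ge (Real.iSup_le (fun K => le_of_not_gt fun hlt => hsub K K.2 ?_) hr)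
  exact (ball_subset_ball hlt.le).trans ball_infDist_compl_subset

end LebesgueRadius

section Domination

variable {P : Set (Set ℝ)} {J K : Set ℝ} {a c d : ℝ}

theorem IsIntervalCollection.isOpen (hP : IsIntervalCollection P) (hK : K ∈ P) : IsOpen K := by
  obtain ⟨c, d, -, rfl⟩ := hP K hK
  exact isOpen_Ioo

theorem Dominated.mono (h : Dominated P K) (hJK : J ⊆ K) : Dominated P J :=
  let ⟨M, hM, hKM⟩ := h
  ⟨M, hM, hJK.trans hKM⟩

theorem Dominated.approxDominated_Ioo (h : Dominated P (Ioo c d)) (hcd : c < d) :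
    ApproxDominated P (Ioo c d) :=
  ⟨fun _ => c, fun _ => d, fun _ => hcd, fun _ => subset_rfl, fun _ => h, (iUnion_const _).symm⟩

theorem approxDominated_Ioo_of_forall_dominated (had : a < d)
    (h : ∀ c ∈ Ioo a d, Dominated P (Ioo c d)) : ApproxDominated P (Ioo a d) := by
  obtain ⟨u, hu_anti, hu_mem, hu_lim⟩ := exists_seq_strictAnti_tendsto' had
  refine ⟨u, fun _ => d, fun n => (hu_mem n).2,
    fun n => Ioo_subset_Ioo_left (hu_anti n.lt_succ_self).le, fun n => h _ (hu_mem n), ?_⟩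
  refine (iUnion_Ioo_of_mono_of_isGLB_of_isLUB hu_anti.antitone monotone_const
    (isGLB_of_tendsto_atTop hu_anti.antitone hu_lim) ?_).symm
  rw [range_const]
  exact isLUB_singleton

end Domination

section LeftEnd

variable {P : Set (Set ℝ)} {J : Set ℝ} {a c d x : ℝ}

theorem IsIntervalCollection.leftEnds_nonempty (hP : IsIntervalCollection P) (hx : x ∈ ⋃₀ P) :
    {c | ∃ d, Ioo c d ∈ P ∧ x ∈ Ioo c d}.Nonempty := by
  obtain ⟨K, hK, hxK⟩ := hx
  obtain ⟨c, d, -, rfl⟩ := hP K hK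
  exact ⟨c, d, hK, hxK⟩

theorem mem_lowerBounds_leftEnds (ha : a ∈ lowerBounds (⋃₀ P)) (x : ℝ) :
    a ∈ lowerBounds {c | ∃ d, Ioo c d ∈ P ∧ x ∈ Ioo c d} := by
  rintro c ⟨d, hP, hx⟩
  exact (isGLB_Ioo (hx.1.trans hx.2)).2 (lowerBounds_mono_set (subset_sUnion_of_mem hP) ha)

theorem le_leftEnd (hP : IsIntervalCollection P) (ha : a ∈ lowerBounds (⋃₀ P))
    (hx : x ∈ ⋃₀ P) : a ≤ leftEnd P x :=
  le_csInf (hP.leftEnds_nonempty hx) (mem_lowerBounds_leftEnds ha x)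

theorem Dominated.leftEnd_le (hP : IsIntervalCollection P) (hbdd : BddBelow (⋃₀ P))
    (h : Dominated P (Ioo c d)) (hx : x ∈ Ioo c d) : leftEnd P x ≤ c := by
  obtain ⟨K, hK, hsub⟩ := h
  obtain ⟨c', d', -, rfl⟩ := hP K hK
  obtain ⟨a, ha⟩ := hbdd
  calc
    leftEnd P x ≤ c' := csInf_le ⟨a, mem_lowerBounds_leftEnds ha x⟩ ⟨d', hK, hsub hx⟩
    _ ≤ c := ((Ioo_subset_Ioo_iff (hx.1.trans hx.2)).1 hsub).1

theorem dominated_Ioo_of_leftEnd_lt (hP : IsIntervalCollection P) (hx : x ∈ ⋃₀ P)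
    (h : leftEnd P x < c) : Dominated P (Ioo c x) := by
  obtain ⟨c', ⟨d', hK, hxK⟩, hlt⟩ := exists_lt_of_csInf_lt (hP.leftEnds_nonempty hx) h
  exact ⟨_, hK, Ioo_subset_Ioo hlt.le hxK.2.le⟩

theorem ApproxDominated.exists_leftEnd_mem_lowerBounds (hP : IsIntervalCollection P)
    (hbdd : BddBelow (⋃₀ P)) (h : ApproxDominated P J) :
    ∃ x ∈ J, leftEnd P x ∈ lowerBounds J := by
  obtain ⟨c, d, hcd, hmono, hdom, rfl⟩ := h
  obtain ⟨x, hx⟩ : (Ioo (c 0) (d 0)).Nonempty := nonempty_Ioo.2 (hcd 0)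
  have hx_mem : ∀ n, x ∈ Ioo (c n) (d n) := fun n =>
    monotone_nat_of_le_succ (f := fun n => Ioo (c n) (d n)) hmono n.zero_le hx
  refine ⟨x, mem_iUnion.2 ⟨0, hx⟩, fun z hz => ?_⟩
  obtain ⟨n, hn⟩ := mem_iUnion.1 hz
  exact ((hdom n).leftEnd_le hP hbdd (hx_mem n)).trans hn.1.le

end LeftEnd

namespace LinkedList

theorem strictMonoOn_a (L : LinkedList) : StrictMonoOn L.a L.S :=
  strictMonoOn_of_lt_add_one ⟨fun i hi k hk j hj => L.consecutive i hi k hk j hj.1 hj.2⟩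
    fun i _ => L.mono_a i

theorem interval_subset_union (L : LinkedList) {i : ℤ} (hi : i ∈ L.S) : L.interval i ⊆ L.union :=
  subset_biUnion_of_mem (u := L.interval) hi

theorem isGLB_union (L : LinkedList) {i : ℤ} (hi : IsLeast L.S i) : IsGLB L.union (L.a i) := by
  refine ⟨fun z hz => ?_, fun c hc => ?_⟩
  · obtain ⟨j, hj, hzj⟩ := mem_iUnion₂.1 hz
    exact (L.strictMonoOn_a.monotoneOn hi.1 hj (hi.2 hj)).trans hzj.1.le
  · exact (isGLB_Ioo (L.lt i hi.1)).2 (lowerBounds_mono_set (L.interval_subset_union hi.1) hc)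

/-- The linked list of the intervals `(z (2k), z (2k + 3))`, `k ≥ 0`, cut out by a strictly
increasing sequence `z`: neighbours overlap in `(z (2k + 2), z (2k + 3))`. -/
def ofStrictMono {z : ℕ → ℝ} (hz : StrictMono z) : LinkedList where
  S := Ici 0
  nonempty := nonempty_Ici
  consecutive _ hi _ _ _ hij _ := le_trans (mem_Ici.1 hi) hij
  a i := z (2 * i.toNat)
  b i := z (2 * i.toNat + 3)
  lt _ _ := hz (by omega)
  mono_a _ hi _ := hz (by have := mem_Ici.1 hi; omega)
  mono_b _ hi _ := hz (by have := mem_Ici.1 hi; omega)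
  overlap _ hi _ := hz (by have := mem_Ici.1 hi; omega)
  gap _ hi _ := hz (by have := mem_Ici.1 hi; omega)

variable {z : ℕ → ℝ} {b : ℝ}

theorem hasLeast_ofStrictMono (hz : StrictMono z) : (ofStrictMono hz).HasLeast :=
  ⟨0, self_mem_Ici, fun _ hj => hj⟩

theorem union_ofStrictMono (hz : StrictMono z) (hb : IsLUB (range z) b) :
    (ofStrictMono hz).union = Ioo (z 0) b := by
  have hz_lt : ∀ n, z n < b := fun n => (hz n.lt_succ_self).trans_le (hb.1 (mem_range_self _))
  refine Subset.antisymm (iUnion₂_subset fun i _ => ?_) fun w hw => ?_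
  · exact Ioo_subset_Ioo (hz.monotone (Nat.zero_le _)) (hz_lt _).le
  · obtain ⟨_, ⟨n, rfl⟩, hwn, -⟩ := hb.exists_between hw.2
    have hw_mem : w ∈ Ioc (z 0) (z n) := ⟨hw.1, hwn.le⟩
    rw [← hz.monotone.biUnion_Ico_Ioc_map_succ 0 n] at hw_mem
    obtain ⟨m, -, hm⟩ := mem_iUnion₂.1 hw_mem
    rw [Nat.succ_eq_succ] at hm
    refine mem_iUnion₂.2 ⟨(m / 2 : ℕ), Int.natCast_nonneg _, ?_, ?_⟩
    · exact (hz.monotone (show 2 * (m / 2) ≤ m by omega)).trans_lt hm.1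
    · exact hm.2.trans_lt (hz (show m + 1 < 2 * (m / 2) + 3 by omega))

end LinkedList

section Advance

variable {P : Set (Set ℝ)} {a b t x : ℝ}

/-- The step map whose iterates produce the endpoints of an inner cover. The fraction `1 / 4` is
chosen so that three consecutive steps stay in a dominated ball about the starting point. -/
noncomputable def advance (P : Set (Set ℝ)) (t : ℝ) : ℝ :=
  t + lebesgueRadius P t / 4

theorem le_advance (P : Set (Set ℝ)) (t : ℝ) : t ≤ advance P t :=
  le_add_of_nonneg_right (div_nonneg (lebesgueRadius_nonneg P t) zero_le_four)

theorem continuous_advance (hP : (⋃₀ P)ᶜ.Nonempty) : Continuous (advance P) :=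
  continuous_id.add ((lipschitzWith_lebesgueRadius hP).continuous.div_const 4)

theorem lebesgueRadius_advance_le (hP : (⋃₀ P)ᶜ.Nonempty) (t : ℝ) :
    lebesgueRadius P (advance P t) ≤ 5 / 4 * lebesgueRadius P t := by
  have hlip := (lipschitzWith_lebesgueRadius hP).le_add_mul (advance P t) t
  rw [Real.dist_eq, abs_of_nonneg (sub_nonneg.2 (le_advance P t)), NNReal.coe_one] at hlip
  unfold advance at hlip ⊢
  linarith

theorem advance_iterate_three_lt (hP : (⋃₀ P)ᶜ.Nonempty) (ht : 0 < lebesgueRadius P t) :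
    (advance P)^[3] t < t + lebesgueRadius P t := by
  have h₁ := lebesgueRadius_advance_le hP t
  have h₂ := lebesgueRadius_advance_le hP (advance P t)
  calc
    (advance P)^[3] t = t + lebesgueRadius P t / 4 + lebesgueRadius P (advance P t) / 4
        + lebesgueRadius P (advance P (advance P t)) / 4 := rfl
    _ < t + lebesgueRadius P t := by linarith

theorem dominated_Ioo_advance_iterate_three (hP : (⋃₀ P)ᶜ.Nonempty)
    (ht : 0 < lebesgueRadius P t) : Dominated P (Ioo t ((advance P)^[3] t)) := by
  have hle : t ≤ (advance P)^[3] t := id_le_iterate_of_id_le (le_advance P) 3 t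
  obtain ⟨K, hK, hball⟩ := exists_ball_subset_of_lt_lebesgueRadius (sub_nonneg.2 hle)
    (sub_lt_iff_lt_add'.2 (advance_iterate_three_lt hP ht))
  rw [Real.ball_eq_Ioo] at hball
  exact ⟨K, hK, (Ioo_subset_Ioo (by linarith) (by linarith)).trans hball⟩

theorem compl_sUnion_nonempty_of_eq_Ioo (hU : ⋃₀ P = Ioo a b) : (⋃₀ P)ᶜ.Nonempty :=
  ⟨a, hU ▸ left_notMem_Ioo⟩

theorem advance_le_of_notMem (hx : x ∉ ⋃₀ P) (t : ℝ) : advance P t ≤ t + |t - x| / 4 := by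
  have h : lebesgueRadius P t ≤ dist t x :=
    (lebesgueRadius_le_infDist_compl_sUnion ⟨x, hx⟩ t).trans (infDist_le_dist_of_mem hx)
  rw [Real.dist_eq] at h
  unfold advance
  linarith

theorem mapsTo_advance (hU : ⋃₀ P = Ioo a b) : MapsTo (advance P) (Ioo a b) (Ioo a b) := by
  intro t ht
  have h := advance_le_of_notMem (hU ▸ right_notMem_Ioo : b ∉ ⋃₀ P) t
  rw [abs_of_neg (sub_neg.2 ht.2)] at h
  exact ⟨ht.1.trans_le (le_advance P t), by linarith [ht.2]⟩

theorem lt_advance (hU : ⋃₀ P = Ioo a b) (hopen : ∀ K ∈ P, IsOpen K) (ht : t ∈ Ioo a b) :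
    t < advance P t :=
  lt_add_of_pos_right t <| div_pos
    (lebesgueRadius_pos (compl_sUnion_nonempty_of_eq_Ioo hU) hopen (hU ▸ ht)) zero_lt_four

theorem isLUB_range_advance_iterate (hU : ⋃₀ P = Ioo a b) (hopen : ∀ K ∈ P, IsOpen K)
    (ht : t ∈ Ioo a b) : IsLUB (range fun n => (advance P)^[n] t) b := by
  have hmono : Monotone fun n => (advance P)^[n] t := fun m n hmn =>
    monotone_iterate_of_id_le (le_advance P) hmn t
  have hle : ∀ n, (advance P)^[n] t ≤ b := fun n => ((mapsTo_advance hU).iterate n ht).2.le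
  have hlim := tendsto_atTop_ciSup hmono ⟨b, forall_mem_range.2 hle⟩
  set l := ⨆ n, (advance P)^[n] t
  have hfix : IsFixedPt (advance P) l := isFixedPt_of_tendsto_iterate hlim
    (continuous_advance (compl_sUnion_nonempty_of_eq_Ioo hU)).continuousAt
  have hal : a < l := ht.1.trans_le (hmono.ge_of_tendsto hlim 0)
  have hlb : l = b := (le_of_tendsto' hlim hle).eq_of_not_lt fun hlb =>
    (lt_advance hU hopen ⟨hal, hlb⟩).ne' hfix
  exact hlb ▸ isLUB_of_tendsto_atTop hmono hlim

end Advance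

section InnerCover

variable {P : Set (Set ℝ)} {a b x : ℝ}

theorem exists_strictMono_approxDominated (hU : ⋃₀ P = Ioo a b) (hopen : ∀ K ∈ P, IsOpen K)
    (hx : x ∈ Ioo a b) (hdom : ∀ c, a < c → Dominated P (Ioo c x)) :
    ∃ z : ℕ → ℝ, StrictMono z ∧ z 0 = a ∧ IsLUB (range z) b ∧
      ∀ k, ApproxDominated P (Ioo (z (2 * k)) (z (2 * k + 3))) := by
  set t := (a + x) / 2 with ht
  have ht_mem : t ∈ Ioo a b := ⟨by linarith [hx.1], by linarith [hx.1, hx.2]⟩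
  have hy_mem : ∀ n, (advance P)^[n] t ∈ Ioo a b := fun n => (mapsTo_advance hU).iterate n ht_mem
  have hy_one : advance P t ≤ x := by
    have h := advance_le_of_notMem (hU ▸ left_notMem_Ioo : a ∉ ⋃₀ P) t
    rw [abs_of_pos (sub_pos.2 ht_mem.1)] at h
    linarith [hx.1]
  let z : ℕ → ℝ
    | 0 => a
    | 1 => (a + t) / 2
    | n + 2 => (advance P)^[n] t
  have hz : StrictMono z := strictMono_nat_of_lt_succ fun
    | 0 => show a < (a + t) / 2 by linarith [ht_mem.1]
    | 1 => show (a + t) / 2 < t by linarith [ht_mem.1]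
    | n + 2 => (lt_advance hU hopen (hy_mem n)).trans_eq (iterate_succ_apply' ..).symm
  refine ⟨z, hz, rfl, ?_, ?_⟩
  · have hlub := isLUB_range_advance_iterate hU hopen ht_mem
    refine ⟨forall_mem_range.2 fun n => ?_, fun c hc => hlub.2 ?_⟩
    · exact (hz.monotone (n.le_add_right 2)).trans (hlub.1 (mem_range_self n))
    · exact forall_mem_range.2 fun n => hc (mem_range_self (n + 2))
  · rintro (_ | k)
    · exact approxDominated_Ioo_of_forall_dominated (hz (show 0 < 3 by omega)) fun c hc =>
        (hdom c hc.1).mono (Ioo_subset_Ioo_right hy_one)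
    · have hP := compl_sUnion_nonempty_of_eq_Ioo hU
      have hdom_step := dominated_Ioo_advance_iterate_three hP
        (lebesgueRadius_pos hP hopen (hU ▸ hy_mem (2 * k)))
      rw [← iterate_add_apply, add_comm] at hdom_step
      exact hdom_step.approxDominated_Ioo (hz (show 2 * k + 2 < 2 * k + 3 + 2 by omega))

theorem exists_isInnerCover_hasLeast_of_leftEnd_eq (hP : IsIntervalCollection P)
    (hU : ⋃₀ P = Ioo a b) (hx : x ∈ ⋃₀ P) (hleft : leftEnd P x = a) :
    ∃ L : LinkedList, IsInnerCover P a b L ∧ L.HasLeast := by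
  obtain ⟨z, hz, rfl, hlub, happrox⟩ := exists_strictMono_approxDominated hU
    (fun _ => hP.isOpen) (hU ▸ hx) fun c hc => dominated_Ioo_of_leftEnd_lt hP hx (hleft ▸ hc)
  exact ⟨.ofStrictMono hz, ⟨LinkedList.union_ofStrictMono hz hlub, fun i _ => happrox i.toNat⟩,
    LinkedList.hasLeast_ofStrictMono hz⟩

theorem IsInnerCover.exists_leftEnd_eq {L : LinkedList} (hP : IsIntervalCollection P)
    (hab : a < b) (hU : ⋃₀ P = Ioo a b) (hL : IsInnerCover P a b L) (hleast : L.HasLeast) :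
    ∃ x ∈ ⋃₀ P, leftEnd P x = a := by
  obtain ⟨i, hi⟩ : ∃ i, IsLeast L.S i := hleast
  have hglb : IsGLB (⋃₀ P) a := hU ▸ isGLB_Ioo hab
  have hunion : L.union = ⋃₀ P := hL.1.trans hU.symm
  have hai : L.a i = a := (hunion ▸ L.isGLB_union hi).unique hglb
  obtain ⟨x, hxi, hx⟩ := (hL.2 i hi.1).exists_leftEnd_mem_lowerBounds hP hglb.bddBelow
  have hxP : x ∈ ⋃₀ P := hunion ▸ L.interval_subset_union hi.1 hxi
  exact ⟨x, hxP, (((isGLB_Ioo (L.lt i hi.1)).2 hx).trans_eq hai).antisymm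
    (le_leftEnd hP hglb.1 hxP)⟩

end InnerCover

/-- For `⋃₀ P = (a, b)`: there exists `x > a` with `L_P(x) = a` iff there is
an inner cover of `(a, b)` with respect to `P` having a least element. -/
theorem stmt12 (P : Set (Set ℝ)) (a b : ℝ) (hab : a < b)
    (hP : IsIntervalCollection P) (hU : ⋃₀ P = Ioo a b) :
    (∃ x, a < x ∧ x ∈ ⋃₀ P ∧ leftEnd P x = a) ↔
      ∃ L : LinkedList, IsInnerCover P a b L ∧ L.HasLeast := by
  constructor
  · rintro ⟨x, -, hx, hleft⟩
    exact exists_isInnerCover_hasLeast_of_leftEnd_eq hP hU hx hleft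
  · rintro ⟨L, hL, hleast⟩
    obtain ⟨x, hx, hleft⟩ := hL.exists_leftEnd_eq hP hab hU hleast
    exact ⟨x, (hU ▸ hx : x ∈ Ioo a b).1, hx, hleft⟩
end
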